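/- Let α, β be distinct elements of the algebraic closure of F_q(T), algebraic of degrees m and n and of inseparable degrees f and g respectively. Then |α − β| ≥ max(1, |α|) · max(1, |β|) · H(α)^{−n/(fg)} · H(β)^{−m/(fg)}. -/

import Mathlib

open Polynomial Filter
open scoped ENNReal

noncomputable section

namespace Ooto

variable (Fq : Type) [Field Fq] [Fintype Fq]

/-- `F_q((T⁻¹))`, realized as formal Laurent series in the variable `X = T⁻¹`. -/
abbrev K := LaurentSeries Fq

/-- The element `T = X⁻¹` of `F_q((T⁻¹))`. -/
def TT : K Fq := HahnSeries.single (-1 : ℤ) (1 : Fq)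

/-- The natural embedding of `F_q[T]` into `F_q((T⁻¹))`, sending `T` to `T`. -/
def polyToK : Polynomial Fq →+* K Fq := Polynomial.eval₂RingHom HahnSeries.C (TT Fq)

open Classical in
/-- The absolute value on `F_q((T⁻¹))`: `|0| = 0` and `|ξ| = q^{-N}` where `N` is the order
of `ξ` as a series in `T⁻¹`. -/
def kabs (f : K Fq) : ℝ := if f = 0 then 0 else (Fintype.card Fq : ℝ) ^ (-f.order)

/-- A fixed algebraic closure of `F_q((T⁻¹))`. -/
abbrev L := AlgebraicClosure (K Fq)

def toL : K Fq →+* L Fq := algebraMap (K Fq) (L Fq)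

def φ : Polynomial Fq →+* L Fq := (toL Fq).comp (polyToK Fq)

/-- Evaluation of `P ∈ (F_q[T])[X]` at `ξ ∈ F_q((T⁻¹))`. -/
def evalK (P : Polynomial (Polynomial Fq)) (ξ : K Fq) : K Fq :=
  Polynomial.eval₂ (polyToK Fq) ξ P

/-- Evaluation of `P ∈ (F_q[T])[X]` at a point of the algebraic closure. -/
def evalL (P : Polynomial (Polynomial Fq)) (α : L Fq) : L Fq :=
  Polynomial.eval₂ (φ Fq) α P

/-- Height of a polynomial over `F_q[T]`: the maximum of the absolute values of its
coefficients. -/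
def Hpoly (P : Polynomial (Polynomial Fq)) : ℝ := ⨆ i : ℕ, kabs Fq (polyToK Fq (P.coeff i))

/-- `P` is the minimal polynomial of `α`: a non-constant irreducible primitive polynomial in
`(F_q[T])[X]` whose leading coefficient is monic in `T`, vanishing at `α`. -/
def IsMinPolyOf (P : Polynomial (Polynomial Fq)) (α : L Fq) : Prop :=
  0 < P.natDegree ∧ Irreducible P ∧ P.IsPrimitive ∧ (P.leadingCoeff).Monic ∧ evalL Fq P α = 0

/-- `α` is algebraic over `F_q(T)`. -/
def IsAlgElem (α : L Fq) : Prop := ∃ P, IsMinPolyOf Fq P α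

open Classical in
/-- The minimal polynomial of an algebraic element (junk value `0` otherwise). -/
def minPolyPrim (α : L Fq) : Polynomial (Polynomial Fq) :=
  if h : IsAlgElem Fq α then h.choose else 0

/-- Degree of an algebraic element. -/
def degAlg (α : L Fq) : ℕ := (minPolyPrim Fq α).natDegree

/-- Height of an algebraic element. -/
def heightAlg (α : L Fq) : ℝ := Hpoly Fq (minPolyPrim Fq α)

/-- Inseparable degree of a polynomial `P ∈ (F_q[T])[X]`: the largest power `f = p^j` of the
characteristic such that `P(X) = R(X^f)` for some `R`. -/
def insepDeg (P : Polynomial (Polynomial Fq)) : ℕ :=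
  (ringChar Fq) ^ sSup {j : ℕ | ∃ R : Polynomial (Polynomial Fq),
    P = R.comp (Polynomial.X ^ (ringChar Fq) ^ j)}

/-- Inseparable degree of an algebraic element. -/
def insepAlg (α : L Fq) : ℕ := insepDeg Fq (minPolyPrim Fq α)

/-- `α'` is the Galois conjugate of the quadratic element `α` (equal to `α` itself in the
inseparable case): the minimal polynomial of `α` factors as `A(X - α)(X - α')`. -/
def IsConjOf (α' α : L Fq) : Prop :=
  (minPolyPrim Fq α).natDegree = 2 ∧
  (minPolyPrim Fq α).map (φ Fq) =
    Polynomial.C (φ Fq (minPolyPrim Fq α).leadingCoeff) *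
      (Polynomial.X - Polynomial.C α) * (Polynomial.X - Polynomial.C α')

/-- `v` is an absolute value on the algebraic closure of `F_q((T⁻¹))` extending `kabs`
(such an extension exists and is unique). -/
structure IsAbsExt (v : L Fq → ℝ) : Prop where
  eq_zero_iff : ∀ x, v x = 0 ↔ x = 0
  map_mul : ∀ x y, v (x * y) = v x * v y
  add_le : ∀ x y, v (x + y) ≤ max (v x) (v y)
  nonneg : ∀ x, 0 ≤ v x
  extends_kabs : ∀ f : K Fq, v (toL Fq f) = kabs Fq f

/-- The exponent `w_n(ξ)`: the supremum of the real numbers `w` such that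
`0 < |P(ξ)| ≤ H(P)^{-w}` for infinitely many `P ∈ (F_q[T])[X]` of degree at most `n`. -/
def wExp (n : ℕ) (ξ : K Fq) : EReal :=
  sSup {x : EReal | ∃ w : ℝ, x = (w : EReal) ∧
    {P : Polynomial (Polynomial Fq) | P.natDegree ≤ n ∧ 0 < kabs Fq (evalK Fq P ξ) ∧
      kabs Fq (evalK Fq P ξ) ≤ Hpoly Fq P ^ (-w)}.Infinite}

/-- The exponent `w_n^*(ξ)`: the supremum of the real numbers `w` such that
`0 < |ξ - α| ≤ H(α)^{-w-1}` for infinitely many algebraic `α` of degree at most `n`. -/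
def wStarExp (v : L Fq → ℝ) (n : ℕ) (ξ : K Fq) : EReal :=
  sSup {x : EReal | ∃ w : ℝ, x = (w : EReal) ∧
    {α : L Fq | IsAlgElem Fq α ∧ degAlg Fq α ≤ n ∧ 0 < v (toL Fq ξ - α) ∧
      v (toL Fq ξ - α) ≤ heightAlg Fq α ^ (-w - 1)}.Infinite}

/-- `pSeq a n = p_{n-1}`, the numerators of the convergents of `[a 0; a 1, a 2, …]`
(with `p_{-1} = 1`). -/
def pSeq (a : ℕ → Polynomial Fq) : ℕ → Polynomial Fq
  | 0 => 1
  | 1 => a 0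
  | (n+2) => a (n+1) * pSeq a (n+1) + pSeq a n

/-- `qSeq a n = q_{n-1}`, the denominators of the convergents of `[a 0; a 1, a 2, …]`
(with `q_{-1} = 0`). -/
def qSeq (a : ℕ → Polynomial Fq) : ℕ → Polynomial Fq
  | 0 => 0
  | 1 => 1
  | (n+2) => a (n+1) * qSeq a (n+1) + qSeq a n

/-- `ξ` has continued fraction expansion `[a 0; a 1, a 2, …]`: each partial quotient `a n`
(`n ≥ 1`) has degree at least one and `|ξ - p_n/q_n| = |q_n|⁻¹|q_{n+1}|⁻¹` for all `n ≥ 0`. -/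
def IsCFOf (ξ : K Fq) (a : ℕ → Polynomial Fq) : Prop :=
  (∀ n, 1 ≤ n → 1 ≤ (a n).natDegree) ∧
  ∀ n : ℕ,
    kabs Fq (ξ - polyToK Fq (pSeq Fq a (n+1)) / polyToK Fq (qSeq Fq a (n+1))) =
      (kabs Fq (polyToK Fq (qSeq Fq a (n+1))) * kabs Fq (polyToK Fq (qSeq Fq a (n+2))))⁻¹

/-- The sequence of partial quotients of `[0; b 0, b 1, b 2, …]`. -/
def cfA (b : ℕ → Polynomial Fq) : ℕ → Polynomial Fq := fun n => if n = 0 then 0 else b (n - 1)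

/-- `qden b n` is the denominator `q_n` of the `n`-th convergent of `[0; b 0, b 1, …]`. -/
def qden (b : ℕ → Polynomial Fq) (n : ℕ) : Polynomial Fq := qSeq Fq (cfA Fq b) (n + 1)

/-- `V^w` for a finite word `V` and a real `w ≥ 0`: `⌊w⌋` copies of `V` followed by the prefix
of `V` of length `⌈(w - ⌊w⌋)|V|⌉`. -/
def wordPow {A : Type*} (V : List A) (w : ℝ) : List A :=
  (List.replicate ⌊w⌋₊ V).flatten ++ V.take ⌈(w - ⌊w⌋₊) * V.length⌉₊

/-- The finite word `l` is a prefix of the infinite word `b`. -/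
def IsPrefixOfSeq {A : Type*} (l : List A) (b : ℕ → A) : Prop :=
  ∀ (i : ℕ) (h : i < l.length), l.get ⟨i, h⟩ = b i

/-- Condition `(*)_ρ` for an infinite word. -/
def SatisfiesCond {A : Type*} (b : ℕ → A) (ρ : ℝ) : Prop :=
  ∃ (U V : ℕ → List A) (w : ℕ → ℝ),
    (∀ n, V n ≠ []) ∧ (∀ n, 0 ≤ w n) ∧
    (∀ n, IsPrefixOfSeq (U n ++ wordPow (V n) (w n)) b) ∧
    (∀ n, ρ * (((U n).length + (V n).length : ℕ) : ℝ) ≤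
      (((U n).length + (wordPow (V n) (w n)).length : ℕ) : ℝ)) ∧
    StrictMono fun n => (wordPow (V n) (w n)).length

/-- The Diophantine exponent of an infinite word: the supremum of the `ρ` such that the word
satisfies Condition `(*)_ρ`. -/
def dioExp {A : Type*} (b : ℕ → A) : EReal :=
  sSup {x : EReal | ∃ ρ : ℝ, x = (ρ : EReal) ∧ SatisfiesCond b ρ}

/-- The complexity function: the number of distinct blocks of `n` consecutive letters. -/
def complexity {A : Type*} (b : ℕ → A) (n : ℕ) : ℕ∞ :=
  {w : Fin n → A | ∃ i : ℕ, ∀ k : Fin n, w k = b (i + k)}.encard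

/-- The infinite word `b` is ultimately periodic. -/
def UltimatelyPeriodic {A : Type*} (b : ℕ → A) : Prop :=
  ∃ N T : ℕ, 0 < T ∧ ∀ n, N ≤ n → b (n + T) = b n

/-!
If `P` and `B` are coprime polynomials with integral coefficients, their resultant is a nonzero
integral element, so its absolute value is at least `1`. On the other hand, expanding the Sylvester
determinant, an ultrametric absolute value of the resultant is at most
`H(P) ^ deg B * H(B) ^ deg P`, and each linear factor `X - α` of `P` improves this bound by the
smallness of `B(α)`. The minimal polynomials `P` of `α` and `Q` of `β` are divisible by
`(X - α) ^ f` and `(X - β) ^ g`. If they are not associated, take `B = Q`, whose value at `α` is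
small to the order `g` in the chordal distance of `α` and `β`. If they are, write `P = R(X ^ f)`
with `R` separable and take `B = R'(X ^ f)`, whose value at `α` is small to the order `f` because
`R` also vanishes at `β ^ f`.
-/

section NonarchimedeanBounds

variable {R : Type*} [CommRing R] {w : AbsoluteValue R ℝ}

lemma gaussNorm_one_le_iff {P : R[X]} {c : ℝ} :
    P.gaussNorm w 1 ≤ c ↔ ∀ i, w (P.coeff i) ≤ c := by
  refine ⟨fun h i => ?_, fun h => ?_⟩
  · simpa only [one_pow, mul_one] using (le_gaussNorm w P zero_le_one i).trans h
  · obtain ⟨i, hi⟩ := exists_eq_gaussNorm w 1 P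
    simpa only [hi, one_pow, mul_one] using h i

lemma apply_coeff_le_gaussNorm_one (P : R[X]) (i : ℕ) : w (P.coeff i) ≤ P.gaussNorm w 1 :=
  gaussNorm_one_le_iff.1 le_rfl i

lemma gaussNorm_one_expand {q : ℕ} (hq : 0 < q) (P : R[X]) :
    (expand R q P).gaussNorm w 1 = P.gaussNorm w 1 := by
  refine le_antisymm (gaussNorm_one_le_iff.2 fun i => ?_) (gaussNorm_one_le_iff.2 fun i => ?_)
  · rw [coeff_expand hq]
    split_ifs
    · exact apply_coeff_le_gaussNorm_one P _
    · simpa using gaussNorm_nonneg w P zero_le_one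
  · simpa only [coeff_expand_mul hq] using apply_coeff_le_gaussNorm_one (expand R q P) (i * q)

variable (w) in
/-- The chordal (projective) distance `|a - b| / (max(1, |a|) max(1, |b|))`, the quantity that the
Liouville inequality bounds from below. -/
def chordalDist (a b : R) : ℝ := w (a - b) / (max 1 (w a) * max 1 (w b))

lemma max_one_apply_pos (a : R) : 0 < max 1 (w a) := lt_max_of_lt_left one_pos

lemma chordalDist_mul_max_mul_max (a b : R) :
    chordalDist w a b * (max 1 (w a) * max 1 (w b)) = w (a - b) :=
  div_mul_cancel₀ _ (mul_pos (max_one_apply_pos a) (max_one_apply_pos b)).ne'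

lemma chordalDist_nonneg (a b : R) : 0 ≤ chordalDist w a b :=
  div_nonneg (w.nonneg _) (mul_pos (max_one_apply_pos a) (max_one_apply_pos b)).le

lemma X_sub_C_pow_dvd_expand {p : ℕ} [ExpChar R p] {S : R[X]} {i : ℕ} {a : R}
    (hS : S.IsRoot (a ^ p ^ i)) : (X - C a) ^ p ^ i ∣ expand R (p ^ i) S := by
  have : ExpChar R[X] p := inferInstance
  have hdvd := map_dvd (expand R (p ^ i)) (dvd_iff_isRoot.2 hS)
  rwa [map_sub, expand_X, expand_C, C_pow, ← sub_pow_expChar_pow] at hdvd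

variable [IsDomain R]

lemma gaussNorm_one_X_sub_C (a : R) : (X - C a).gaussNorm w 1 = max 1 (w a) := by
  refine le_antisymm (gaussNorm_one_le_iff.2 fun i => ?_) (max_le ?_ ?_)
  · rcases i with _ | _ | i <;> simp [coeff_X, coeff_C]
  · calc (1 : ℝ) = w ((X - C a).coeff 1) := by simp
      _ ≤ _ := apply_coeff_le_gaussNorm_one _ 1
  · calc w a = w ((X - C a).coeff 0) := by simp
      _ ≤ _ := apply_coeff_le_gaussNorm_one _ 0

lemma gaussNorm_one_X_sub_C_pow (hna : IsNonarchimedean w) (a : R) (k : ℕ) :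
    ((X - C a) ^ k).gaussNorm w 1 = max 1 (w a) ^ k := by
  have := gaussNorm_isAbsoluteValue hna one_pos
  rw [IsAbsoluteValue.abv_pow (gaussNorm w 1), gaussNorm_one_X_sub_C]

lemma gaussNorm_one_derivative_le (hna : IsNonarchimedean w) (P : R[X]) :
    (derivative P).gaussNorm w 1 ≤ P.gaussNorm w 1 := by
  refine gaussNorm_one_le_iff.2 fun i => ?_
  have hcast : w ((i + 1 : ℕ) : R) ≤ 1 := hna.apply_natCast_le_one
  calc w ((derivative P).coeff i) = w (P.coeff (i + 1)) * w ((i + 1 : ℕ) : R) := by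
        rw [coeff_derivative, map_mul, Nat.cast_succ]
    _ ≤ w (P.coeff (i + 1)) := mul_le_of_le_one_right (w.nonneg _) hcast
    _ ≤ P.gaussNorm w 1 := apply_coeff_le_gaussNorm_one P _

lemma apply_eval_le (hna : IsNonarchimedean w) {P : R[X]} {n : ℕ} (hn : P.natDegree ≤ n) (x : R) :
    w (P.eval x) ≤ P.gaussNorm w 1 * max 1 (w x) ^ n := by
  obtain ⟨i, hi, hle⟩ := hna.finset_image_add_of_nonempty (fun i => P.coeff i * x ^ i)
    (t := Finset.range (P.natDegree + 1)) ⟨0, by simp⟩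
  have hin : i ≤ n := (Finset.mem_range_succ_iff.1 hi).trans hn
  have hpow : w x ^ i ≤ max 1 (w x) ^ n :=
    (pow_le_pow_left₀ (w.nonneg x) (le_max_right _ _) i).trans
      (pow_le_pow_right₀ (le_max_left _ _) hin)
  rw [eval_eq_sum_range]
  refine hle.trans ?_
  rw [map_mul, map_pow]
  exact mul_le_mul (apply_coeff_le_gaussNorm_one P i) hpow (pow_nonneg (w.nonneg x) _)
    (gaussNorm_nonneg w P zero_le_one)

lemma apply_det_le_prod (hna : IsNonarchimedean w) {ι : Type*} [Fintype ι] [DecidableEq ι]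
    (M : Matrix ι ι R) {c : ι → ℝ} (hc : ∀ i j, w (M i j) ≤ c j) : w M.det ≤ ∏ j, c j := by
  obtain ⟨σ, -, hσ⟩ := hna.finset_image_add_of_nonempty
    (fun σ : Equiv.Perm ι => Equiv.Perm.sign σ • ∏ i, M (σ i) i) Finset.univ_nonempty
  rw [Matrix.det_apply]
  calc _ ≤ w (Equiv.Perm.sign σ • ∏ i, M (σ i) i) := hσ
    _ = ∏ i, w (M (σ i) i) := by
        rcases Int.units_eq_one_or (Equiv.Perm.sign σ) with h | h <;> simp [h, Units.smul_def]
    _ ≤ ∏ j, c j := Finset.prod_le_prod (fun i _ => w.nonneg _) fun i _ => hc _ i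

lemma apply_resultant_le (hna : IsNonarchimedean w) (A B : R[X]) (m n : ℕ) :
    w (resultant A B m n) ≤ A.gaussNorm w 1 ^ n * B.gaussNorm w 1 ^ m := by
  have hA := gaussNorm_nonneg w A zero_le_one
  have hB := gaussNorm_nonneg w B zero_le_one
  have hdet := apply_det_le_prod hna (sylvester A B m n)
    (c := Fin.addCases (fun _ => B.gaussNorm w 1) fun _ => A.gaussNorm w 1) fun i j => by
      induction j using Fin.addCases <;>
        simp only [sylvester, Matrix.of_apply, Fin.addCases_left, Fin.addCases_right] <;>
        split_ifs <;> simp only [apply_coeff_le_gaussNorm_one, map_zero, hA, hB]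
  simpa [Fin.prod_univ_add, resultant, mul_comm] using hdet

lemma apply_resultant_le_of_X_sub_C_pow_dvd (hna : IsNonarchimedean w) {A B : R[X]} (hA : A ≠ 0)
    {n f : ℕ} {a : R} {c r : ℝ} (hdvd : (X - C a) ^ f ∣ A) (hdeg : B.natDegree ≤ n)
    (hc : B.gaussNorm w 1 ≤ c) (hr : w (B.eval a) ≤ c * max 1 (w a) ^ n * r) :
    w (resultant A B A.natDegree n) ≤ A.gaussNorm w 1 ^ n * c ^ A.natDegree * r ^ f := by
  obtain ⟨S, rfl⟩ := hdvd
  have hS : S ≠ 0 := right_ne_zero_of_mul hA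
  have hB0 := gaussNorm_nonneg w B zero_le_one
  have hS0 := gaussNorm_nonneg w S zero_le_one
  have hpow : ((X - C a) ^ f).natDegree = f := by
    rw [natDegree_pow, natDegree_X_sub_C, mul_one]
  have hfactor : resultant ((X - C a) ^ f * S) B ((X - C a) ^ f * S).natDegree n =
      B.eval a ^ f * resultant S B S.natDegree n := by
    rw [natDegree_mul (pow_ne_zero _ (X_sub_C_ne_zero a)) hS, resultant_mul_left _ _ _ _ hdeg,
      hpow, resultant_X_sub_C_pow_left _ _ _ _ hdeg]
  have hcofactor : w (resultant S B S.natDegree n) ≤ S.gaussNorm w 1 ^ n * c ^ S.natDegree :=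
    (apply_resultant_le hna S B _ n).trans (by gcongr)
  rw [hfactor, natDegree_mul (pow_ne_zero _ (X_sub_C_ne_zero a)) hS, hpow,
    gaussNorm_mul hna one_pos, gaussNorm_one_X_sub_C_pow hna, map_mul, map_pow]
  calc w (B.eval a) ^ f * w (resultant S B S.natDegree n)
      ≤ (c * max 1 (w a) ^ n * r) ^ f * (S.gaussNorm w 1 ^ n * c ^ S.natDegree) :=
        mul_le_mul (pow_le_pow_left₀ (w.nonneg _) hr f) hcofactor (w.nonneg _)
          (pow_nonneg ((w.nonneg _).trans hr) f)
    _ = (max 1 (w a) ^ f * S.gaussNorm w 1) ^ n * c ^ (f + S.natDegree) * r ^ f := by ring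

lemma apply_eval_le_of_X_sub_C_pow_dvd (hna : IsNonarchimedean w) {B : R[X]} {n g : ℕ} {b : R}
    (hdvd : (X - C b) ^ g ∣ B) (hdeg : B.natDegree ≤ n) (a : R) :
    w (B.eval a) ≤ B.gaussNorm w 1 * max 1 (w a) ^ n * chordalDist w a b ^ g := by
  obtain ⟨S, rfl⟩ := hdvd
  rcases eq_or_ne S 0 with rfl | hS
  · simp
  rw [natDegree_mul (pow_ne_zero _ (X_sub_C_ne_zero b)) hS, natDegree_pow,
    natDegree_X_sub_C, mul_one] at hdeg
  obtain ⟨k, rfl⟩ := Nat.exists_eq_add_of_le (le_of_add_le_left hdeg)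
  have hSa := apply_eval_le hna (Nat.add_le_add_iff_left.1 hdeg) a
  rw [gaussNorm_mul hna one_pos, gaussNorm_one_X_sub_C_pow hna]
  simp only [eval_mul, eval_pow, eval_sub, eval_X, eval_C, map_mul, map_pow]
  calc w (a - b) ^ g * w (S.eval a)
      ≤ w (a - b) ^ g * (S.gaussNorm w 1 * max 1 (w a) ^ k) := by gcongr
    _ = _ := by rw [← chordalDist_mul_max_mul_max a b]; ring

/- Writing `A = (X - a ^ q) S`, one has `A'(a ^ q) = S(a ^ q)`, and `S` still vanishes
at `b ^ q ≠ a ^ q`. -/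
lemma apply_eval_expand_derivative_le (hna : IsNonarchimedean w) {p : ℕ} [ExpChar R p] {A : R[X]}
    {i : ℕ} {a b : R} (hne : a ≠ b) (ha : A.IsRoot (a ^ p ^ i)) (hb : A.IsRoot (b ^ p ^ i)) :
    w ((expand R (p ^ i) (derivative A)).eval a) ≤
      (expand R (p ^ i) A).gaussNorm w 1 * max 1 (w a) ^ (expand R (p ^ i) A).natDegree *
        chordalDist w a b ^ p ^ i := by
  have hq : 0 < p ^ i := expChar_pow_pos R p i
  obtain ⟨S, rfl⟩ := dvd_iff_isRoot.2 ha
  have hab : b ^ p ^ i - a ^ p ^ i ≠ 0 := by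
    rw [← sub_pow_expChar_pow]
    exact pow_ne_zero _ (sub_ne_zero.2 hne.symm)
  have hSb : S.IsRoot (b ^ p ^ i) := by
    simpa [IsRoot.def, hab] using hb
  have hderiv : (expand R (p ^ i) (derivative ((X - C (a ^ p ^ i)) * S))).eval a =
      (expand R (p ^ i) S).eval a := by
    simp [expand_eval, derivative_mul, -map_pow]
  have hdeg : (expand R (p ^ i) S).natDegree ≤
      (expand R (p ^ i) ((X - C (a ^ p ^ i)) * S)).natDegree := by
    rcases eq_or_ne S 0 with rfl | hS
    · simp
    rw [natDegree_expand, natDegree_expand, natDegree_mul (X_sub_C_ne_zero _) hS]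
    gcongr
    exact le_add_self
  have hnorm : (expand R (p ^ i) S).gaussNorm w 1 ≤
      (expand R (p ^ i) ((X - C (a ^ p ^ i)) * S)).gaussNorm w 1 := by
    rw [gaussNorm_one_expand hq, gaussNorm_one_expand hq, gaussNorm_mul hna one_pos,
      gaussNorm_one_X_sub_C]
    exact le_mul_of_one_le_left (gaussNorm_nonneg w S zero_le_one) (le_max_left _ _)
  rw [hderiv]
  refine (apply_eval_le_of_X_sub_C_pow_dvd hna (X_sub_C_pow_dvd_expand hSb) hdeg a).trans ?_
  have := chordalDist_nonneg (w := w) a b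
  have := max_one_apply_pos (w := w) a
  gcongr

end NonarchimedeanBounds

section InseparableDegree

variable {O : Type*} [CommRing O]

/-- The inseparable degree of `P` over a domain of characteristic exponent `p`: the largest power
`p ^ j` such that `P` is a polynomial in `X ^ p ^ j`. If `p = 1` or `P` is constant, the set of
exponents is unbounded, its supremum is `0` by convention, and the value is `1`. -/
def inseparableDegree (p : ℕ) (P : O[X]) : ℕ :=
  p ^ sSup {j : ℕ | ∃ R : O[X], P = expand O (p ^ j) R}

lemma bddAbove_setOf_eq_expand_pow {p : ℕ} (hp : 1 < p) {P : O[X]} (hP : P.natDegree ≠ 0) :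
    BddAbove {j : ℕ | ∃ R : O[X], P = expand O (p ^ j) R} := by
  refine ⟨P.natDegree, ?_⟩
  rintro j ⟨R, rfl⟩
  rw [natDegree_expand] at hP ⊢
  calc j ≤ p ^ j := (Nat.lt_pow_self hp).le
    _ ≤ R.natDegree * p ^ j := Nat.le_mul_of_pos_left _ (pos_of_ne_zero (left_ne_zero_of_mul hP))

lemma exists_eq_expand_inseparableDegree [IsDomain O] (p : ℕ) [hchar : ExpChar O p] {P : O[X]}
    (hP : P.natDegree ≠ 0) :
    ∃ (i : ℕ) (R : O[X]),
      inseparableDegree p P = p ^ i ∧ P = expand O (p ^ i) R ∧ derivative R ≠ 0 := by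
  have hexp : {j : ℕ | ∃ R : O[X], P = expand O (p ^ j) R}.Nonempty := ⟨0, P, by simp⟩
  rcases hchar with _ | hp
  · exact ⟨0, P, by simp [inseparableDegree], by simp, mt derivative_eq_zero.1 hP⟩
  · have hbdd := bddAbove_setOf_eq_expand_pow hp.one_lt hP
    obtain ⟨R, hR⟩ := Nat.sSup_mem hexp hbdd
    refine ⟨_, R, rfl, hR, fun hderiv => ?_⟩
    refine (Nat.lt_succ_self _).not_ge (le_csSup hbdd ⟨contract p R, ?_⟩)
    rwa [pow_succ, ← expand_expand, expand_contract p hderiv hp.ne_zero]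

lemma inseparableDegree_eq_of_associated [IsDomain O] (p : ℕ) {P Q : O[X]} (h : Associated P Q) :
    inseparableDegree p P = inseparableDegree p Q := by
  have hsub {P Q : O[X]} (h : Associated P Q) :
      {j : ℕ | ∃ R : O[X], P = expand O (p ^ j) R} ⊆ {j | ∃ R : O[X], Q = expand O (p ^ j) R} := by
    rintro j ⟨R, rfl⟩
    obtain ⟨u, rfl⟩ := h
    obtain ⟨c, -, hc⟩ := isUnit_iff.1 u.isUnit
    exact ⟨R * C c, by rw [map_mul, expand_C, hc]⟩
  rw [inseparableDegree, inseparableDegree, (hsub h).antisymm (hsub h.symm)]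

end InseparableDegree

section Coprimality

variable {O F : Type*} [CommRing O] [IsDomain O] [Field F] {φ : O →+* F}

lemma isCoprime_map_of_isCoprime_map_fractionRing (hφ : Function.Injective φ) {P Q : O[X]}
    (h : IsCoprime (P.map (algebraMap O (FractionRing O)))
      (Q.map (algebraMap O (FractionRing O)))) :
    IsCoprime (P.map φ) (Q.map φ) := by
  have hlift : (IsFractionRing.lift hφ).comp (algebraMap O (FractionRing O)) = φ :=
    IsLocalization.lift_comp _
  simpa only [coe_mapRingHom, Polynomial.map_map, hlift] using
    h.map (mapRingHom (IsFractionRing.lift hφ : FractionRing O →+* F))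

variable [IsGCDMonoid O]

lemma isCoprime_map_of_not_associated (hφ : Function.Injective φ) {P Q : O[X]}
    (hP : Irreducible P) (hQ : Irreducible Q) (hdeg : P.natDegree ≠ 0) (hPQ : ¬Associated P Q) :
    IsCoprime (P.map φ) (Q.map φ) := by
  have hprim : P.IsPrimitive := hP.isPrimitive hdeg
  refine isCoprime_map_of_isCoprime_map_fractionRing hφ ?_
  refine (hprim.irreducible_iff_irreducible_map_fraction_map.1 hP).coprime_iff_not_dvd.2 ?_
  exact fun hdvd => hPQ (hP.associated_of_dvd hQ (hprim.dvd_of_fraction_map_dvd_fraction_map hdvd))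

lemma isCoprime_map_derivative (hφ : Function.Injective φ) {R : O[X]} (hR : Irreducible R)
    (hderiv : derivative R ≠ 0) : IsCoprime (R.map φ) ((derivative R).map φ) := by
  have hdeg : R.natDegree ≠ 0 := fun h => hderiv (derivative_of_natDegree_zero h)
  have hirr : Irreducible (R.map (algebraMap O (FractionRing O))) :=
    (hR.isPrimitive hdeg).irreducible_iff_irreducible_map_fraction_map.1 hR
  refine isCoprime_map_of_isCoprime_map_fractionRing hφ ?_
  rw [← derivative_map]
  refine (separable_iff_derivative_ne_zero hirr).2 ?_
  rwa [derivative_map, Polynomial.map_ne_zero_iff (IsFractionRing.injective O _)]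

lemma isCoprime_map_expand_derivative (hφ : Function.Injective φ) {q : ℕ} (hq : q ≠ 0) {R : O[X]}
    (hR : Irreducible (expand O q R)) (hderiv : derivative R ≠ 0) :
    IsCoprime ((expand O q R).map φ) ((expand O q (derivative R)).map φ) := by
  rw [map_expand, map_expand]
  exact (isCoprime_map_derivative hφ (of_irreducible_expand hq hR) hderiv).map
    (expand F q).toRingHom

end Coprimality

lemma mul_rpow_neg_div_mul_rpow_neg_div_le {A B M d : ℝ} (hA : 0 < A) (hB : 0 < B) (hM : 0 < M)
    (hd : 0 ≤ d) {n m k : ℕ} (hk : k ≠ 0) (h : 1 ≤ A ^ n * B ^ m * (d / M) ^ k) :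
    M * A ^ (-(n : ℝ) / k) * B ^ (-(m : ℝ) / k) ≤ d := by
  have hroot {x : ℝ} (hx : 0 < x) (l : ℕ) : (x ^ (-(l : ℝ) / k)) ^ k = (x ^ l)⁻¹ := by
    rw [← Real.rpow_mul_natCast hx.le, div_mul_cancel₀ _ (Nat.cast_ne_zero.2 hk),
      Real.rpow_neg hx.le, Real.rpow_natCast]
  refine le_of_pow_le_pow_left₀ hk hd ?_
  rw [mul_pow, mul_pow, hroot hA, hroot hB]
  calc M ^ k * (A ^ n)⁻¹ * (B ^ m)⁻¹
      ≤ M ^ k * (A ^ n)⁻¹ * (B ^ m)⁻¹ * (A ^ n * B ^ m * (d / M) ^ k) :=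
        le_mul_of_one_le_right (by positivity) h
    _ = d ^ k := by rw [div_pow]; field_simp

section Liouville

variable {O F : Type*} [CommRing O] [Field F] {w : AbsoluteValue F ℝ} {φ : O →+* F}

lemma injective_of_one_le_apply (hφ : ∀ a ≠ 0, 1 ≤ w (φ a)) : Function.Injective φ := by
  refine (injective_iff_map_eq_zero φ).2 fun a ha => ?_
  by_contra h
  simpa [ha, zero_lt_one.not_ge] using hφ a h

lemma one_le_gaussNorm_one_map (hφ : ∀ a ≠ 0, 1 ≤ w (φ a)) {P : O[X]} (hP : P ≠ 0) :
    1 ≤ (P.map φ).gaussNorm w 1 :=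
  calc 1 ≤ w ((P.map φ).coeff P.natDegree) := by
        rw [coeff_map]
        exact hφ _ (leadingCoeff_ne_zero.2 hP)
    _ ≤ (P.map φ).gaussNorm w 1 := apply_coeff_le_gaussNorm_one _ _

lemma gaussNorm_one_map_le_of_dvd (hna : IsNonarchimedean w) (hφ : ∀ a ≠ 0, 1 ≤ w (φ a))
    {P Q : O[X]} (hQ : Q ≠ 0) (hPQ : P ∣ Q) :
    (P.map φ).gaussNorm w 1 ≤ (Q.map φ).gaussNorm w 1 := by
  obtain ⟨S, rfl⟩ := hPQ
  rw [Polynomial.map_mul, gaussNorm_mul hna one_pos]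
  exact le_mul_of_one_le_right (gaussNorm_nonneg w _ zero_le_one)
    (one_le_gaussNorm_one_map hφ (right_ne_zero_of_mul hQ))

lemma eval₂_expand_eq_zero_iff {q : ℕ} {R : O[X]} {a : F} :
    (expand O q R).eval₂ φ a = 0 ↔ (R.map φ).IsRoot (a ^ q) := by
  rw [IsRoot.def, ← expand_eval, ← map_expand, eval_map]

lemma one_le_apply_resultant (hφ : ∀ a ≠ 0, 1 ≤ w (φ a)) {P B : O[X]} (hP : P ≠ 0)
    (hPB : IsCoprime (P.map φ) (B.map φ)) {n : ℕ} (hn : (B.map φ).natDegree ≤ n) :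
    1 ≤ w (resultant (P.map φ) (B.map φ) (P.map φ).natDegree n) := by
  have hne : resultant (P.map φ) (B.map φ) (P.map φ).natDegree n ≠ 0 := by
    obtain ⟨k, rfl⟩ := Nat.exists_eq_add_of_le hn
    rw [resultant_add_right_deg _ _ _ _ _ le_rfl]
    refine mul_ne_zero (pow_ne_zero _ (leadingCoeff_ne_zero.2 ?_)) (resultant_ne_zero _ _ hPB)
    exact (Polynomial.map_ne_zero_iff (injective_of_one_le_apply hφ)).2 hP
  rw [resultant_map_map] at hne ⊢
  exact hφ _ fun h => hne (by rw [h, map_zero])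

lemma one_le_gaussNorm_pow_mul_pow (hna : IsNonarchimedean w) (hφ : ∀ a ≠ 0, 1 ≤ w (φ a))
    {P B : O[X]} (hP : P ≠ 0) (hPB : IsCoprime (P.map φ) (B.map φ)) {n f : ℕ} {a : F} {c r : ℝ}
    (hdvd : (X - C a) ^ f ∣ P.map φ) (hdeg : (B.map φ).natDegree ≤ n)
    (hc : (B.map φ).gaussNorm w 1 ≤ c)
    (hr : w ((B.map φ).eval a) ≤ c * max 1 (w a) ^ n * r) :
    1 ≤ (P.map φ).gaussNorm w 1 ^ n * c ^ (P.map φ).natDegree * r ^ f :=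
  (one_le_apply_resultant hφ hP hPB hdeg).trans <|
    apply_resultant_le_of_X_sub_C_pow_dvd hna
      ((Polynomial.map_ne_zero_iff (injective_of_one_le_apply hφ)).2 hP) hdvd hdeg hc hr

variable [IsDomain O] {p : ℕ} [ExpChar O p] [ExpChar F p]

lemma X_sub_C_pow_inseparableDegree_dvd_map {P : O[X]} (hP : P.natDegree ≠ 0) {α : F}
    (hα : P.eval₂ φ α = 0) : (X - C α) ^ inseparableDegree p P ∣ P.map φ := by
  obtain ⟨i, R, hi, rfl, -⟩ := exists_eq_expand_inseparableDegree p hP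
  rw [hi, map_expand]
  exact X_sub_C_pow_dvd_expand (eval₂_expand_eq_zero_iff.1 hα)

variable [IsGCDMonoid O]

lemma one_le_gaussNorm_mul_chordalDist_of_not_associated (hna : IsNonarchimedean w)
    (hφ : ∀ a ≠ 0, 1 ≤ w (φ a)) {P Q : O[X]} (hP : Irreducible P) (hQ : Irreducible Q)
    (hdegP : P.natDegree ≠ 0) (hdegQ : Q.natDegree ≠ 0) (hPQ : ¬Associated P Q) {α β : F}
    (hα : P.eval₂ φ α = 0) (hβ : Q.eval₂ φ β = 0) :
    1 ≤ (P.map φ).gaussNorm w 1 ^ Q.natDegree * (Q.map φ).gaussNorm w 1 ^ P.natDegree *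
      chordalDist w α β ^ (inseparableDegree p P * inseparableDegree p Q) := by
  have hinj := injective_of_one_le_apply hφ
  have hQα := apply_eval_le_of_X_sub_C_pow_dvd hna
    (X_sub_C_pow_inseparableDegree_dvd_map (p := p) hdegQ hβ) le_rfl α
  have h := one_le_gaussNorm_pow_mul_pow hna hφ hP.ne_zero
    (isCoprime_map_of_not_associated hinj hP hQ hdegP hPQ)
    (X_sub_C_pow_inseparableDegree_dvd_map (p := p) hdegP hα) le_rfl le_rfl hQα
  simpa only [natDegree_map_eq_of_injective hinj, ← pow_mul, mul_comm (inseparableDegree p Q)]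
    using h

lemma one_le_gaussNorm_mul_chordalDist_of_eval₂_eq_zero (hna : IsNonarchimedean w)
    (hφ : ∀ a ≠ 0, 1 ≤ w (φ a)) {P : O[X]} (hP : Irreducible P) (hdeg : P.natDegree ≠ 0)
    {α β : F} (hα : P.eval₂ φ α = 0) (hβ : P.eval₂ φ β = 0) (hne : α ≠ β) :
    1 ≤ (P.map φ).gaussNorm w 1 ^ P.natDegree * (P.map φ).gaussNorm w 1 ^ P.natDegree *
      chordalDist w α β ^ (inseparableDegree p P * inseparableDegree p P) := by
  have hinj := injective_of_one_le_apply hφ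
  have hdvd := X_sub_C_pow_inseparableDegree_dvd_map (p := p) hdeg hα
  obtain ⟨i, R, hi, rfl, hderiv⟩ := exists_eq_expand_inseparableDegree p hdeg
  have hq : 0 < p ^ i := expChar_pow_pos O p i
  have hmap : (expand O (p ^ i) (derivative R)).map φ =
      expand F (p ^ i) (derivative (R.map φ)) := by
    rw [map_expand, derivative_map]
  have hcop := isCoprime_map_expand_derivative hinj hq.ne' hP hderiv
  have hdegB : ((expand O (p ^ i) (derivative R)).map φ).natDegree ≤
      ((expand O (p ^ i) R).map φ).natDegree := by
    rw [hmap, map_expand, natDegree_expand, natDegree_expand]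
    gcongr
    exact (natDegree_derivative_le _).trans (Nat.sub_le _ _)
  have hnorm : ((expand O (p ^ i) (derivative R)).map φ).gaussNorm w 1 ≤
      ((expand O (p ^ i) R).map φ).gaussNorm w 1 := by
    rw [hmap, map_expand, gaussNorm_one_expand hq, gaussNorm_one_expand hq]
    exact gaussNorm_one_derivative_le hna _
  have heval := apply_eval_expand_derivative_le hna hne
    (eval₂_expand_eq_zero_iff.1 hα) (eval₂_expand_eq_zero_iff.1 hβ)
  rw [← hmap, ← map_expand] at heval
  have h := one_le_gaussNorm_pow_mul_pow hna hφ hP.ne_zero hcop hdvd hdegB hnorm heval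
  rw [natDegree_map_eq_of_injective hinj, ← pow_mul, hi] at h
  rwa [hi]

lemma one_le_gaussNorm_mul_chordalDist (hna : IsNonarchimedean w) (hφ : ∀ a ≠ 0, 1 ≤ w (φ a))
    {P Q : O[X]} (hP : Irreducible P) (hQ : Irreducible Q) {α β : F} (hα : P.eval₂ φ α = 0)
    (hβ : Q.eval₂ φ β = 0) (hne : α ≠ β) :
    1 ≤ (P.map φ).gaussNorm w 1 ^ Q.natDegree * (Q.map φ).gaussNorm w 1 ^ P.natDegree *
      chordalDist w α β ^ (inseparableDegree p P * inseparableDegree p Q) := by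
  have hker : ∀ a, φ a = 0 → a = 0 :=
    (injective_iff_map_eq_zero φ).1 (injective_of_one_le_apply hφ)
  have hdegP := (natDegree_pos_of_eval₂_root hP.ne_zero φ hα hker).ne'
  have hdegQ := (natDegree_pos_of_eval₂_root hQ.ne_zero φ hβ hker).ne'
  by_cases hPQ : Associated P Q
  · have hβP : P.eval₂ φ β = 0 := eval₂_eq_zero_of_dvd_of_eval₂_eq_zero φ β hPQ.symm.dvd hβ
    have hnorm : (Q.map φ).gaussNorm w 1 = (P.map φ).gaussNorm w 1 :=
      (gaussNorm_one_map_le_of_dvd hna hφ hP.ne_zero hPQ.symm.dvd).antisymm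
        (gaussNorm_one_map_le_of_dvd hna hφ hQ.ne_zero hPQ.dvd)
    rw [hnorm, ← natDegree_eq_of_degree_eq (degree_eq_degree_of_associated hPQ),
      ← inseparableDegree_eq_of_associated p hPQ]
    exact one_le_gaussNorm_mul_chordalDist_of_eval₂_eq_zero hna hφ hP hdegP hα hβP hne
  · exact one_le_gaussNorm_mul_chordalDist_of_not_associated hna hφ hP hQ hdegP hdegQ hPQ hα hβ

end Liouville

theorem stmt8_general {O F : Type*} [CommRing O] [IsDomain O] [IsGCDMonoid O] [Field F]
    {w : AbsoluteValue F ℝ} (hna : IsNonarchimedean w) {φ : O →+* F} (hφ : ∀ a ≠ 0, 1 ≤ w (φ a))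
    (p : ℕ) [ExpChar O p] {P Q : O[X]} (hP : Irreducible P) (hQ : Irreducible Q) {α β : F}
    (hα : P.eval₂ φ α = 0) (hβ : Q.eval₂ φ β = 0) (hne : α ≠ β) :
    max 1 (w α) * max 1 (w β) *
      (P.map φ).gaussNorm w 1 ^
        (-(Q.natDegree : ℝ) / ((inseparableDegree p P : ℝ) * (inseparableDegree p Q : ℝ))) *
      (Q.map φ).gaussNorm w 1 ^
        (-(P.natDegree : ℝ) / ((inseparableDegree p P : ℝ) * (inseparableDegree p Q : ℝ))) ≤
      w (α - β) := by
  have : ExpChar F p := expChar_of_injective_ringHom (injective_of_one_le_apply hφ) p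
  have hpos {S : O[X]} (hS : Irreducible S) : 0 < (S.map φ).gaussNorm w 1 :=
    one_pos.trans_le (one_le_gaussNorm_one_map hφ hS.ne_zero)
  have hinsep : inseparableDegree p P * inseparableDegree p Q ≠ 0 :=
    mul_ne_zero (expChar_pow_pos O p _).ne' (expChar_pow_pos O p _).ne'
  rw [← Nat.cast_mul]
  exact mul_rpow_neg_div_mul_rpow_neg_div_le (hpos hP) (hpos hQ)
    (mul_pos (max_one_apply_pos α) (max_one_apply_pos β)) (w.nonneg _) hinsep
    (one_le_gaussNorm_mul_chordalDist hna hφ hP hQ hα hβ hne)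

section LaurentSeries

variable {k : Type} [Field k]

lemma coeff_polyToK (a : k[X]) (n : ℕ) : (polyToK k a).coeff (-(n : ℤ)) = a.coeff n := by
  have hT (i : ℕ) : TT k ^ i = HahnSeries.single (-(i : ℤ)) (1 : k) := by
    simp [TT, HahnSeries.single_pow]
  induction a using Polynomial.induction_on' with
  | add a b ha hb => rw [map_add, HahnSeries.coeff_add, ha, hb, coeff_add]
  | monomial i c =>
    rw [polyToK, coe_eval₂RingHom, eval₂_monomial, hT, HahnSeries.C_apply,
      HahnSeries.single_mul_single, HahnSeries.coeff_single, coeff_monomial]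
    simp [eq_comm]

lemma IsAlgElem.isMinPolyOf_minPolyPrim {α : L k} (hα : IsAlgElem k α) :
    IsMinPolyOf k (minPolyPrim k α) α := by
  rw [minPolyPrim, dif_pos hα]
  exact hα.choose_spec

variable [Fintype k]

lemma one_le_kabs_polyToK {a : k[X]} (ha : a ≠ 0) : 1 ≤ kabs k (polyToK k a) := by
  have hcoeff : (polyToK k a).coeff (-(a.natDegree : ℤ)) ≠ 0 := by
    rwa [coeff_polyToK, coeff_natDegree, leadingCoeff_ne_zero]
  have hne : polyToK k a ≠ 0 := fun h => hcoeff (by rw [h, HahnSeries.coeff_zero])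
  have horder : (polyToK k a).order ≤ -(a.natDegree : ℤ) :=
    HahnSeries.order_le_of_coeff_ne_zero hcoeff
  rw [kabs, if_neg hne]
  exact one_le_zpow₀ (by exact_mod_cast Fintype.card_pos) (by lia)

/-- An absolute value extending `kabs`, as a bundled `AbsoluteValue`. -/
def IsAbsExt.toAbsoluteValue {v : L k → ℝ} (hv : IsAbsExt k v) : AbsoluteValue (L k) ℝ where
  toFun := v
  map_mul' := hv.map_mul
  nonneg' := hv.nonneg
  eq_zero' := hv.eq_zero_iff
  add_le' x y := (hv.add_le x y).trans (max_le_add_of_nonneg (hv.nonneg x) (hv.nonneg y))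

lemma IsAbsExt.one_le_apply_φ {v : L k → ℝ} (hv : IsAbsExt k v) {a : k[X]} (ha : a ≠ 0) :
    1 ≤ v (φ k a) :=
  (one_le_kabs_polyToK ha).trans_eq (hv.extends_kabs _).symm

lemma IsAbsExt.Hpoly_eq_gaussNorm {v : L k → ℝ} (hv : IsAbsExt k v) (P : k[X][X]) :
    Hpoly k P = (P.map (φ k)).gaussNorm hv.toAbsoluteValue 1 := by
  have hcoeff (i : ℕ) :
      kabs k (polyToK k (P.coeff i)) = hv.toAbsoluteValue ((P.map (φ k)).coeff i) := by
    rw [coeff_map]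
    exact (hv.extends_kabs _).symm
  have hle (i : ℕ) : kabs k (polyToK k (P.coeff i)) ≤
      (P.map (φ k)).gaussNorm hv.toAbsoluteValue 1 :=
    (hcoeff i).trans_le (apply_coeff_le_gaussNorm_one _ i)
  refine (ciSup_le hle).antisymm (gaussNorm_one_le_iff.2 fun i => ?_)
  exact (hcoeff i).symm.trans_le (le_ciSup ⟨_, Set.forall_mem_range.2 hle⟩ i)

end LaurentSeries

theorem stmt8 (Fq : Type) [Field Fq] [Fintype Fq]
    (v : L Fq → ℝ) (hv : IsAbsExt Fq v)
    (α β : L Fq) (hα : IsAlgElem Fq α) (hβ : IsAlgElem Fq β) (hne : α ≠ β) :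
    max 1 (v α) * max 1 (v β) *
      heightAlg Fq α ^ (-(degAlg Fq β : ℝ) / ((insepAlg Fq α : ℝ) * (insepAlg Fq β : ℝ))) *
      heightAlg Fq β ^ (-(degAlg Fq α : ℝ) / ((insepAlg Fq α : ℝ) * (insepAlg Fq β : ℝ))) ≤
      v (α - β) := by
  have : Fact (ringChar Fq).Prime := ⟨CharP.char_is_prime Fq _⟩
  obtain ⟨-, hP, -, -, hPα⟩ := hα.isMinPolyOf_minPolyPrim
  obtain ⟨-, hQ, -, -, hQβ⟩ := hβ.isMinPolyOf_minPolyPrim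
  rw [heightAlg, heightAlg, hv.Hpoly_eq_gaussNorm, hv.Hpoly_eq_gaussNorm]
  exact stmt8_general (w := hv.toAbsoluteValue) hv.add_le (fun _ => hv.one_le_apply_φ)
    (ringChar Fq) hP hQ hPα hQβ hne

end Ooto
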